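/- arXiv:2403.17821 — 3 statements merged into one kernel-verified Lean document; each statement's English description precedes it below -/
import Mathlib

section
/- Mountain Pass Theorem under the weak Cerami–Palais–Smale condition (Proposition 2.2): Let X and S be real Banach spaces, ι : X → S a continuous linear embedding, and J : X → ℝ a C¹ functional. Suppose there exist ρ > 0, α ∈ ℝ, and u₀, e ∈ X such that: (i) for every u ∈ X with ‖ι(u) − ι(u₀)‖_S = ρ one has J(u) ≥ α > J(u₀); (ii) ‖ι(e) − ι(u₀)‖_S > ρ and J(e) < J(u₀). Set c = inf over φ ∈ C([0,1], X) with φ(0) = u₀ and φ(1) = e of max_{s ∈ [0,1]} J(φ(s)). If J satisfies the weak Cerami–Palais–Smale condition at level c, then J has a critical point u*, different from u₀, such that J(u*) = c ≥ α > J(u₀). -/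
/-!
By Ekeland's principle applied to `φ ↦ max J ∘ φ` on the complete space of paths, with the distance
divided by `1 + ‖φ‖`, there are almost optimal paths which no competitor improves at a rate
proportional to `dist φ ψ / (1 + ‖φ‖)`. On such a path some maximum point `x` of `J` must satisfy
`‖dJ x‖ (1 + ‖x‖) ≤ ε`: otherwise a partition of unity glues local descent directions of size at
most `1 + ‖φ s‖` into a vector field along the path, and a short move along that field lowers the
maximum too fast. These points form a Cerami sequence at the mountain pass level.
-/

open Filter Topology Set

section Ekeland

theorem summable_of_add_le_of_bddBelow {a d : ℕ → ℝ} (hd : ∀ n, 0 ≤ d n)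
    (had : ∀ n, a (n + 1) + d n ≤ a n) (ha : BddBelow (range a)) : Summable d := by
  obtain ⟨m, hm⟩ := ha
  refine summable_of_sum_range_le (c := a 0 - m) hd fun n => ?_
  calc ∑ i ∈ Finset.range n, d i ≤ ∑ i ∈ Finset.range n, (a i - a (i + 1)) :=
        Finset.sum_le_sum fun i _ => by linarith [had i]
    _ = a 0 - a n := Finset.sum_range_sub' a n
    _ ≤ a 0 - m := sub_le_sub_left (hm ⟨n, rfl⟩) _

theorem exists_seq_almost_minimizing {Y : Type*} {q : Y → Y → ℝ} (hq : ∀ y, q y y = 0) {Ψ : Y → ℝ}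
    (hΨ : BddBelow (range Ψ)) (y₀ : Y) :
    ∃ u : ℕ → Y, u 0 = y₀ ∧ ∀ n, Ψ (u (n + 1)) + q (u n) (u (n + 1)) ≤ Ψ (u n) ∧
      ∀ z, Ψ z + q (u n) z ≤ Ψ (u n) → Ψ (u (n + 1)) ≤ Ψ z + 1 / ((n : ℝ) + 1) := by
  have hnext : ∀ (n : ℕ) (y : Y), ∃ y', Ψ y' + q y y' ≤ Ψ y ∧
      ∀ z, Ψ z + q y z ≤ Ψ y → Ψ y' ≤ Ψ z + 1 / ((n : ℝ) + 1) := by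
    intro n y
    have hne : (Ψ '' {z | Ψ z + q y z ≤ Ψ y}).Nonempty := ⟨Ψ y, y, by simp [hq], rfl⟩
    obtain ⟨_, ⟨y', hy', rfl⟩, hlt⟩ :=
      exists_lt_of_csInf_lt hne (lt_add_of_pos_right _ (Nat.one_div_pos_of_nat (α := ℝ) (n := n)))
    refine ⟨y', hy', fun z hz => hlt.le.trans ?_⟩
    gcongr
    exact csInf_le (hΨ.mono (image_subset_range _ _)) ⟨z, hz, rfl⟩
  choose next hdesc hmin using hnext
  exact ⟨fun n => Nat.rec y₀ next n, rfl, fun n => ⟨hdesc n _, hmin n _⟩⟩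

theorem exists_forall_le_add_cost {Y : Type*} [TopologicalSpace Y]
    {q : Y → Y → ℝ} (hq_nonneg : ∀ y z, 0 ≤ q y z) (hq_self : ∀ y, q y y = 0)
    (hq_cont : ∀ z, Continuous fun y => q y z)
    (hq_complete : ∀ u : ℕ → Y, (Summable fun n => q (u n) (u (n + 1))) →
      ∃ y, Tendsto u atTop (𝓝 y))
    {Ψ : Y → ℝ} (hΨ : LowerSemicontinuous Ψ) (hΨ_bdd : BddBelow (range Ψ)) (y₀ : Y) :
    ∃ y, Ψ y ≤ Ψ y₀ ∧ ∀ z, Ψ y ≤ Ψ z + q y z := by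
  obtain ⟨u, rfl, hu⟩ := exists_seq_almost_minimizing hq_self hΨ_bdd y₀
  have hanti : Antitone (Ψ ∘ u) := antitone_nat_of_succ_le fun n =>
    (le_add_of_nonneg_right (hq_nonneg _ _)).trans (hu n).1
  obtain ⟨y, hy⟩ := hq_complete u <|
    summable_of_add_le_of_bddBelow (a := Ψ ∘ u) (fun n => hq_nonneg _ _) (fun n => (hu n).1)
      (hΨ_bdd.mono (range_comp_subset_range u Ψ))
  have hy_le : ∀ n, Ψ y ≤ Ψ (u n) := fun n => le_of_forall_lt fun x hx => by
    obtain ⟨k, hxk, hnk⟩ := ((hy.eventually (hΨ y x hx)).and (eventually_ge_atTop n)).exists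
    exact hxk.trans_le (hanti hnk)
  refine ⟨y, hy_le 0, fun z => le_of_not_gt fun hz => ?_⟩
  -- Without a triangle inequality for `q`, it is continuity and strictness of `hz` that make `z`
  -- a competitor of `u (n + 1)` for large `n`.
  have hz_adm : ∀ᶠ n in atTop, Ψ z + q (u n) z < Ψ y :=
    (((hq_cont z).tendsto y).comp hy |>.const_add (Ψ z)).eventually_lt_const hz
  have hyz : Ψ y ≤ Ψ z + 0 :=
    ge_of_tendsto ((tendsto_one_div_add_atTop_nhds_zero_nat (𝕜 := ℝ)).const_add (Ψ z)) <| by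
      filter_upwards [hz_adm] with n hn
      exact (hy_le (n + 1)).trans ((hu n).2 z (hn.le.trans (hy_le n)))
  linarith [hq_nonneg y z]

variable {Y : Type*} [PseudoMetricSpace Y] {w : Y → ℝ}

theorem le_mul_exp_sum_dist_div (hw_pos : ∀ y, 0 < w y) (hw : LipschitzWith 1 w) (u : ℕ → Y)
    (n : ℕ) :
    w (u n) ≤ w (u 0) * Real.exp (∑ i ∈ Finset.range n, dist (u i) (u (i + 1)) / w (u i)) := by
  induction n with
  | zero => simp
  | succ n ih =>
    have hpos := hw_pos (u n)
    calc w (u (n + 1)) ≤ w (u n) + dist (u n) (u (n + 1)) := by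
          simpa [dist_comm] using hw.le_add_mul (u (n + 1)) (u n)
      _ = w (u n) * (dist (u n) (u (n + 1)) / w (u n) + 1) := by field_simp; ring
      _ ≤ w (u n) * Real.exp (dist (u n) (u (n + 1)) / w (u n)) := by
          gcongr
          exact Real.add_one_le_exp _
      _ ≤ _ := by
          rw [Finset.sum_range_succ, Real.exp_add, ← mul_assoc]
          gcongr

theorem cauchySeq_of_summable_dist_div (hw_pos : ∀ y, 0 < w y) (hw : LipschitzWith 1 w) {u : ℕ → Y}
    (hu : Summable fun n => dist (u n) (u (n + 1)) / w (u n)) : CauchySeq u := by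
  have hdiv : ∀ n, 0 ≤ dist (u n) (u (n + 1)) / w (u n) := fun n =>
    div_nonneg dist_nonneg (hw_pos _).le
  obtain ⟨R, hR⟩ : ∃ R, ∀ n, w (u n) ≤ R := by
    refine ⟨w (u 0) * Real.exp (∑' i, dist (u i) (u (i + 1)) / w (u i)), fun n =>
      (le_mul_exp_sum_dist_div hw_pos hw u n).trans ?_⟩
    have := (hw_pos (u 0)).le
    gcongr
    exact hu.sum_le_tsum _ fun i _ => hdiv i
  refine cauchySeq_of_summable_dist <|
    Summable.of_nonneg_of_le (fun _ => dist_nonneg) (fun n => ?_) (hu.mul_left R)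
  calc dist (u n) (u (n + 1)) = w (u n) * (dist (u n) (u (n + 1)) / w (u n)) :=
        (mul_div_cancel₀ _ (hw_pos _).ne').symm
    _ ≤ R * (dist (u n) (u (n + 1)) / w (u n)) := mul_le_mul_of_nonneg_right (hR n) (hdiv n)

theorem exists_forall_le_add_mul_dist_div [CompleteSpace Y] (hw_pos : ∀ y, 0 < w y)
    (hw : LipschitzWith 1 w) {Ψ : Y → ℝ} (hΨ : LowerSemicontinuous Ψ)
    (hΨ_bdd : BddBelow (range Ψ)) {η : ℝ} (hη : 0 < η) (y₀ : Y) :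
    ∃ y, Ψ y ≤ Ψ y₀ ∧ ∀ z, Ψ y ≤ Ψ z + η * (dist y z / w y) := by
  refine exists_forall_le_add_cost (q := fun y z => η * (dist y z / w y)) (fun y z => ?_)
    (fun y => by simp) (fun z => ?_) (fun u hu => ?_) hΨ hΨ_bdd y₀
  · have := hw_pos y
    positivity
  · exact continuous_const.mul
      ((continuous_id.dist continuous_const).div hw.continuous fun y => (hw_pos y).ne')
  · exact cauchySeq_tendsto_of_complete <|
      cauchySeq_of_summable_dist_div hw_pos hw ((summable_mul_left_iff hη.ne').1 hu)

end Ekeland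

section Descent

variable {X : Type*} [NormedAddCommGroup X] [NormedSpace ℝ X]

theorem exists_norm_lt_apply_lt_neg (f : X →L[ℝ] ℝ) {r δ : ℝ} (hr : 0 < r)
    (hδ : δ < ‖f‖ * r) : ∃ x, ‖x‖ < r ∧ f x < -δ := by
  obtain ⟨x, hx, hfx⟩ := f.exists_lt_apply_of_lt_opNorm ((div_lt_iff₀ hr).2 hδ)
  have hrx : ‖r • x‖ < r := by
    rw [norm_smul, Real.norm_of_nonneg hr.le]
    exact mul_lt_of_lt_one_right hr hx
  have hfrx : δ < |f (r • x)| := by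
    rwa [map_smul, smul_eq_mul, abs_mul, abs_of_pos hr, mul_comm, ← div_lt_iff₀ hr]
  rcases lt_abs.1 hfrx with h | h
  · exact ⟨-(r • x), by rwa [norm_neg], by rw [map_neg]; linarith⟩
  · exact ⟨r • x, hrx, by linarith⟩

theorem exists_continuousMap_apply_lt_neg {K : Type*} [TopologicalSpace K] [NormalSpace K]
    [ParacompactSpace K] {f : K → X →L[ℝ] ℝ} (hf : Continuous f) {r : K → ℝ} (hr : Continuous r)
    (hr_pos : ∀ s, 0 < r s) {C U : Set K} (hC : IsClosed C) (hU : IsOpen U) (hCU : C ⊆ U) {δ : ℝ}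
    (hδ : ∀ s ∈ C, δ < ‖f s‖ * r s) :
    ∃ v : C(K, X), (∀ s, ‖v s‖ ≤ r s) ∧ (∀ s ∈ C, f s (v s) < -δ) ∧ ∀ s ∉ U, v s = 0 := by
  let T : K → Set X := fun s => Metric.closedBall 0 (r s) ∩
    ((⋂ _ : s ∈ C, {x | f s x < -δ}) ∩ ⋂ _ : s ∉ U, {0})
  have hT : ∀ s x, x ∈ T s ↔ ‖x‖ ≤ r s ∧ (s ∈ C → f s x < -δ) ∧ (s ∉ U → x = 0) := fun s x => by
    simp only [T, mem_inter_iff, mem_closedBall_zero_iff, mem_iInter, mem_ofPred_eq,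
      mem_singleton_iff]
  have hconv : ∀ s, Convex ℝ (T s) := fun s => (convex_closedBall 0 (r s)).inter <|
    (convex_iInter fun _ => convex_halfSpace_lt (f s).toLinearMap.isLinear (-δ)).inter <|
      convex_iInter fun _ => convex_singleton 0
  have hloc : ∀ s, ∃ x, ∀ᶠ t in 𝓝 s, x ∈ T t := by
    intro s
    simp only [hT]
    by_cases hs : s ∈ C
    · obtain ⟨x, hxr, hfx⟩ := exists_norm_lt_apply_lt_neg (f s) (hr_pos s) (hδ s hs)
      refine ⟨x, ?_⟩
      filter_upwards [hr.continuousAt.eventually_const_lt hxr,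
        (hf.clm_apply continuous_const).continuousAt.eventually_lt_const hfx,
        hU.mem_nhds (hCU hs)] with t hrt hft htU
      exact ⟨hrt.le, fun _ => hft, fun htU' => (htU' htU).elim⟩
    · refine ⟨0, ?_⟩
      filter_upwards [hC.isOpen_compl.mem_nhds hs] with t ht
      exact ⟨by simpa only [norm_zero] using (hr_pos t).le, fun htC => (ht htC).elim, fun _ => rfl⟩
  obtain ⟨v, hv⟩ := exists_continuous_forall_mem_convex_of_local_const hconv hloc
  simp only [hT] at hv
  exact ⟨v, fun s => (hv s).1, fun s => (hv s).2.1, fun s => (hv s).2.2⟩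

variable {J : X → ℝ}

theorem apply_add_smul_le_of_fderiv_apply_le (hJ : Differentiable ℝ J) {x v : X} {h δ : ℝ}
    (hh : 0 ≤ h) (hδ : ∀ t ∈ Ioo 0 h, fderiv ℝ J (x + t • v) v ≤ -δ) :
    J (x + h • v) ≤ J x - h * δ := by
  have hderiv : ∀ t : ℝ, HasDerivAt (fun t : ℝ => J (x + t • v)) (fderiv ℝ J (x + t • v) v) t :=
    fun t => (hJ _).hasFDerivAt.comp_hasDerivAt t <| by
      simpa using ((hasDerivAt_id t).smul_const v).const_add x
  have hslope := (convex_Icc 0 h).image_sub_le_mul_sub_of_deriv_le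
    (fun t _ => (hderiv t).continuousAt.continuousWithinAt)
    (fun t _ => (hderiv t).differentiableAt.differentiableWithinAt)
    (fun t ht => (hderiv t).deriv.trans_le (hδ t (by rwa [interior_Icc] at ht)))
    0 (left_mem_Icc.2 hh) h (right_mem_Icc.2 hh) hh
  simp only [zero_smul, add_zero, sub_zero] at hslope
  linarith

variable {K : Type*} [TopologicalSpace K]

theorem eventually_apply_add_smul_le_of_fderiv_apply_lt (hJ : ContDiff ℝ 1 J) (φ v : C(K, X))
    {δ : ℝ} {s : K} (hs : fderiv ℝ J (φ s) (v s) < -δ) :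
    ∀ᶠ p : ℝ × K in 𝓝 (0, s), 0 < p.1 → J (φ p.2 + p.1 • v p.2) ≤ J (φ p.2) - p.1 * δ := by
  have hcont : Continuous fun p : ℝ × K => fderiv ℝ J (φ p.2 + p.1 • v p.2) (v p.2) :=
    ((hJ.continuous_fderiv one_ne_zero).comp (by fun_prop)).clm_apply (by fun_prop)
  have hneg : ∀ᶠ p : ℝ × K in 𝓝 (0, s), fderiv ℝ J (φ p.2 + p.1 • v p.2) (v p.2) < -δ :=
    hcont.continuousAt.eventually_lt_const (by simpa using hs)
  rw [nhds_prod_eq] at hneg ⊢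
  obtain ⟨P, hP, Q, hQ, hPQ⟩ := eventually_prod_iff.1 hneg
  obtain ⟨r, hr, hrP⟩ := Metric.eventually_nhds_iff.1 hP
  refine eventually_prod_iff.2 ⟨fun h => dist h 0 < r, Metric.ball_mem_nhds 0 hr, Q, hQ,
    fun {h} hh {s'} hs' hh_pos => apply_add_smul_le_of_fderiv_apply_le
      (hJ.differentiable one_ne_zero) hh_pos.le fun t ht => (hPQ (x := t) (hrP ?_) hs').le⟩
  have hth : dist t 0 < dist h 0 := by
    simpa [abs_of_pos ht.1, abs_of_pos hh_pos] using ht.2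
  exact hth.trans hh

theorem eventually_forall_apply_add_smul_le [CompactSpace K] (hJ : ContDiff ℝ 1 J) (φ v : C(K, X))
    {M δ : ℝ} (hM : ∀ s, J (φ s) ≤ M)
    (hv : ∀ s, J (φ s) = M → fderiv ℝ J (φ s) (v s) < -δ) :
    ∀ᶠ h in 𝓝[>] (0 : ℝ), ∀ s, J (φ s + h • v s) ≤ M - h * δ := by
  have hJc := hJ.continuous
  have hloc : ∀ s ∈ (univ : Set K), ∀ᶠ p : ℝ × K in 𝓝 (0, s),
      0 < p.1 → J (φ p.2 + p.1 • v p.2) ≤ M - p.1 * δ := by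
    intro s _
    rcases (hM s).eq_or_lt with hs | hs
    · filter_upwards [eventually_apply_add_smul_le_of_fderiv_apply_lt hJ φ v (hv s hs)]
        with p hp hp_pos
      linarith [hp hp_pos, hM p.2]
    · have hlt : ∀ᶠ p : ℝ × K in 𝓝 (0, s), J (φ p.2 + p.1 • v p.2) < M - p.1 * δ :=
        ContinuousAt.eventually_lt (by fun_prop) (by fun_prop) (by simpa using hs)
      filter_upwards [hlt] with p hp _ using hp.le
  filter_upwards [nhdsWithin_le_nhds
    (isCompact_univ.eventually_forall_of_forall_eventually
      (P := fun h s => 0 < h → J (φ s + h • v s) ≤ M - h * δ) hloc), self_mem_nhdsWithin]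
    with h hh hh_pos s using hh s trivial hh_pos

theorem bddAbove_range_comp_continuousMap {Z : Type*} [TopologicalSpace Z] {J : Z → ℝ}
    [CompactSpace K] (hJ : Continuous J) (φ : C(K, Z)) : BddAbove (range fun s => J (φ s)) :=
  (isCompact_range (hJ.comp φ.continuous)).bddAbove

theorem lowerSemicontinuous_iSup_apply {Z : Type*} [TopologicalSpace Z] {J : Z → ℝ}
    [CompactSpace K] (hJ : Continuous J) :
    LowerSemicontinuous fun φ : C(K, Z) => ⨆ s, J (φ s) :=
  lowerSemicontinuous_ciSup (bddAbove_range_comp_continuousMap hJ) fun s =>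
    (hJ.comp (continuous_eval_const s)).lowerSemicontinuous

theorem exists_continuousMap_iSup_le_sub [CompactSpace K] [T2Space K] [Nonempty K]
    (hJ : ContDiff ℝ 1 J) (φ : C(K, X)) {b δ : ℝ} (hb : b < ⨆ s, J (φ s))
    (hδ : ∀ s, J (φ s) = ⨆ t, J (φ t) → δ < ‖fderiv ℝ J (φ s)‖ * (1 + ‖φ s‖)) :
    ∃ ψ : C(K, X), (∀ s, J (φ s) ≤ b → ψ s = φ s) ∧ ∃ h > 0, dist φ ψ ≤ h * (1 + ‖φ‖) ∧
      ⨆ s, J (ψ s) ≤ (⨆ s, J (φ s)) - h * δ := by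
  have hJφ : Continuous fun s => J (φ s) := hJ.continuous.comp φ.continuous
  obtain ⟨v, hv_norm, hv_desc, hv_zero⟩ := exists_continuousMap_apply_lt_neg
    ((hJ.continuous_fderiv one_ne_zero).comp φ.continuous)
    (r := fun s => 1 + ‖φ s‖) (by fun_prop) (fun s => by positivity)
    (C := {s | J (φ s) = ⨆ t, J (φ t)}) (U := {s | b < J (φ s)})
    (isClosed_eq hJφ continuous_const) (isOpen_lt continuous_const hJφ)
    (fun s hs => hb.trans_eq hs.symm) hδ
  obtain ⟨h, hdesc, (hh : 0 < h)⟩ := ((eventually_forall_apply_add_smul_le hJ φ v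
    (le_ciSup (bddAbove_range_comp_continuousMap hJ.continuous φ)) hv_desc).and
    self_mem_nhdsWithin).exists
  refine ⟨φ + h • v, fun s hs => by simp [hv_zero s hs.not_gt], h, hh, ?_, ciSup_le hdesc⟩
  have hv : ‖v‖ ≤ 1 + ‖φ‖ := (v.norm_le (by positivity)).2 fun s =>
    (hv_norm s).trans (by gcongr; exact φ.norm_coe_le_norm s)
  rw [dist_self_add_right, norm_smul, Real.norm_of_nonneg hh.le]
  gcongr

end Descent

section Minimax

variable {X : Type*} [NormedAddCommGroup X] [NormedSpace ℝ X] {J : X → ℝ}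

/-- A Cerami–Palais–Smale sequence for `J` at level `c`. -/
structure IsCeramiSeq (J : X → ℝ) (c : ℝ) (u : ℕ → X) : Prop where
  tendsto_apply : Tendsto (fun n => J (u n)) atTop (𝓝 c)
  tendsto_norm_fderiv_mul : Tendsto (fun n => ‖fderiv ℝ J (u n)‖ * (1 + ‖u n‖)) atTop (𝓝 0)

variable [CompleteSpace X] {K : Type*} [TopologicalSpace K] [CompactSpace K] [T2Space K]
  [Nonempty K] {Γ : Set C(K, X)} {b c : ℝ}

theorem exists_norm_fderiv_mul_le_of_isGLB (hJ : ContDiff ℝ 1 J) (hΓ : IsClosed Γ)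
    (hΓ_stable : ∀ φ ∈ Γ, ∀ ψ : C(K, X), (∀ s, J (φ s) ≤ b → ψ s = φ s) → ψ ∈ Γ) (hbc : b < c)
    (hc : IsGLB ((fun φ : C(K, X) => ⨆ s, J (φ s)) '' Γ) c) {ε : ℝ} (hε : 0 < ε) :
    ∃ x, c ≤ J x ∧ J x < c + ε ∧ ‖fderiv ℝ J x‖ * (1 + ‖x‖) ≤ ε := by
  by_contra! hlarge
  have : CompleteSpace Γ := hΓ.completeSpace_coe
  let Ψ : Γ → ℝ := fun φ => ⨆ s, J (φ.1 s)
  have hcΨ : ∀ φ, c ≤ Ψ φ := fun φ => hc.1 ⟨φ, φ.2, rfl⟩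
  have hΨ : LowerSemicontinuous Ψ :=
    (lowerSemicontinuous_iSup_apply hJ.continuous).comp continuous_subtype_val
  have hw : LipschitzWith 1 fun φ : Γ => 1 + ‖φ.1‖ := LipschitzWith.of_le_add fun φ ψ => by
    rw [Subtype.dist_eq, dist_eq_norm]
    linarith [norm_le_norm_add_norm_sub' φ.1 ψ.1]
  obtain ⟨_, ⟨φ₀, hφ₀, rfl⟩, -, hφ₀_lt⟩ := hc.exists_between (lt_add_of_pos_right c hε)
  obtain ⟨φ, hφ_le, hφ_min⟩ := exists_forall_le_add_mul_dist_div (fun φ : Γ => by positivity) hw hΨ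
    ⟨c, forall_mem_range.2 hcΨ⟩ (half_pos hε) ⟨φ₀, hφ₀⟩
  obtain ⟨ψ, hψ_eq, h, hh, hφψ, hψ_le⟩ := exists_continuousMap_iSup_le_sub hJ φ.1
    (hbc.trans_le (hcΨ φ)) fun s hs =>
      hlarge _ ((hcΨ φ).trans_eq hs.symm) (hs.trans_lt (hφ_le.trans_lt hφ₀_lt))
  have hquot : dist φ.1 ψ / (1 + ‖φ.1‖) ≤ h := (div_le_iff₀ (by positivity)).2 hφψ
  have : Ψ φ < Ψ φ := calc
    Ψ φ ≤ (⨆ s, J (ψ s)) + ε / 2 * (dist φ.1 ψ / (1 + ‖φ.1‖)) :=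
      hφ_min ⟨ψ, hΓ_stable φ φ.2 ψ hψ_eq⟩
    _ ≤ Ψ φ - h * ε + ε / 2 * h := by gcongr
    _ < Ψ φ := by linarith [mul_pos hh hε]
  exact this.false

theorem exists_isCeramiSeq_of_isGLB (hJ : ContDiff ℝ 1 J) (hΓ : IsClosed Γ)
    (hΓ_stable : ∀ φ ∈ Γ, ∀ ψ : C(K, X), (∀ s, J (φ s) ≤ b → ψ s = φ s) → ψ ∈ Γ) (hbc : b < c)
    (hc : IsGLB ((fun φ : C(K, X) => ⨆ s, J (φ s)) '' Γ) c) : ∃ u, IsCeramiSeq J c u := by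
  choose u hcu huc hu using fun n : ℕ => exists_norm_fderiv_mul_le_of_isGLB hJ hΓ hΓ_stable hbc hc
    (Nat.one_div_pos_of_nat (α := ℝ) (n := n))
  have hlim := tendsto_one_div_add_atTop_nhds_zero_nat (𝕜 := ℝ)
  exact ⟨u, tendsto_of_tendsto_of_tendsto_of_le_of_le tendsto_const_nhds
      (by simpa only [add_zero] using hlim.const_add c) hcu fun n => (huc n).le,
    squeeze_zero (fun n => by positivity) hu hlim⟩

end Minimax

section MountainPass

/-- The continuous paths from `x` to `y`, as a subset of the normed space `C([0,1], X)`
(which Mathlib's `Path x y` is not). -/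
def pathsBetween {X : Type*} [TopologicalSpace X] (x y : X) : Set C(unitInterval, X) :=
  {φ | φ 0 = x ∧ φ 1 = y}

/-- The mountain pass level: the infimum over paths from `x` to `y` of the maximum of `J` along
the path, written as a supremum (attained when `J` is continuous). -/
noncomputable def mountainPassLevel {X : Type*} [TopologicalSpace X] (J : X → ℝ) (x y : X) : ℝ :=
  sInf ((fun φ : C(unitInterval, X) => ⨆ s, J (φ s)) '' pathsBetween x y)

theorem mountainPassLevel_eq_sInf {X : Type*} [TopologicalSpace X] (J : X → ℝ) (x y : X) :
    mountainPassLevel J x y = sInf {m : ℝ | ∃ φ : C(unitInterval, X),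
      φ 0 = x ∧ φ 1 = y ∧ m = ⨆ s : unitInterval, J (φ s)} := by
  refine congrArg sInf (ext fun m => ?_)
  simp only [pathsBetween, mem_image, mem_ofPred_eq, and_assoc, eq_comm]

theorem isClosed_pathsBetween {X : Type*} [TopologicalSpace X] [T1Space X] (x y : X) :
    IsClosed (pathsBetween x y) :=
  (isClosed_singleton.preimage (continuous_eval_const 0)).inter
    (isClosed_singleton.preimage (continuous_eval_const 1))

theorem pathsBetween_nonempty {X : Type*} [TopologicalSpace X] [PathConnectedSpace X] (x y : X) :
    (pathsBetween x y).Nonempty :=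
  let γ := PathConnectedSpace.somePath x y
  ⟨γ, γ.source, γ.target⟩

theorem isGLB_mountainPassLevel {X : Type*} [TopologicalSpace X] [PathConnectedSpace X]
    {J : X → ℝ} {x y : X} {a : ℝ} (ha : ∀ φ ∈ pathsBetween x y, a ≤ ⨆ s, J (φ s)) :
    IsGLB ((fun φ : C(unitInterval, X) => ⨆ s, J (φ s)) '' pathsBetween x y)
      (mountainPassLevel J x y) :=
  isGLB_csInf ((pathsBetween_nonempty x y).image _) ⟨a, forall_mem_image.2 ha⟩

theorem exists_le_apply_of_forall_eq {K X : Type*} [TopologicalSpace K] [PreconnectedSpace K]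
    [TopologicalSpace X] {J g : X → ℝ} (hg : Continuous g) {ρ α : ℝ}
    (hα : ∀ x, g x = ρ → α ≤ J x) (φ : C(K, X)) {s t : K} (hs : g (φ s) ≤ ρ)
    (ht : ρ ≤ g (φ t)) : ∃ r, α ≤ J (φ r) :=
  let ⟨r, hr⟩ := mem_range_of_exists_le_of_exists_ge (hg.comp φ.continuous) ⟨s, hs⟩ ⟨t, ht⟩
  ⟨r, hα _ hr⟩

theorem mountain_pass_wCPS_general {X : Type*} [NormedAddCommGroup X] [NormedSpace ℝ X]
    [CompleteSpace X] {J : X → ℝ} (hJ : ContDiff ℝ 1 J) {α : ℝ} {u₀ e : X} (hu₀ : J u₀ < α)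
    (he : J e < α) (hα : ∀ φ ∈ pathsBetween u₀ e, ∃ s, α ≤ J (φ s))
    (hCPS : ∀ u, IsCeramiSeq J (mountainPassLevel J u₀ e) u →
      ∃ x, J x = mountainPassLevel J u₀ e ∧ fderiv ℝ J x = 0) :
    ∃ x, x ≠ u₀ ∧ J x = mountainPassLevel J u₀ e ∧ fderiv ℝ J x = 0 ∧
      α ≤ mountainPassLevel J u₀ e := by
  have hα_sup : ∀ φ ∈ pathsBetween u₀ e, α ≤ ⨆ s, J (φ s) := fun φ hφ =>
    let ⟨s, hs⟩ := hα φ hφ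
    hs.trans (le_ciSup (bddAbove_range_comp_continuousMap hJ.continuous φ) s)
  have hglb := isGLB_mountainPassLevel hα_sup
  have hα_le : α ≤ mountainPassLevel J u₀ e := hglb.2 (forall_mem_image.2 hα_sup)
  have hstable : ∀ φ ∈ pathsBetween u₀ e, ∀ ψ : C(unitInterval, X),
      (∀ s, J (φ s) ≤ max (J u₀) (J e) → ψ s = φ s) → ψ ∈ pathsBetween u₀ e := by
    rintro φ ⟨rfl, rfl⟩ ψ hψ
    exact ⟨hψ 0 (le_max_left _ _), hψ 1 (le_max_right _ _)⟩
  obtain ⟨u, hu⟩ := exists_isCeramiSeq_of_isGLB hJ (isClosed_pathsBetween u₀ e) hstable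
    ((max_lt hu₀ he).trans_le hα_le) hglb
  obtain ⟨x, hx, hx'⟩ := hCPS u hu
  exact ⟨x, by rintro rfl; linarith, hx, hx', hα_le⟩

end MountainPass

/-- **Mountain Pass Theorem under the weak Cerami–Palais–Smale condition.**
Let `X` and `S` be real Banach spaces, `ι : X → S` a continuous linear embedding,
and `J : X → ℝ` a `C¹` functional. Suppose there are `ρ > 0`, `α ∈ ℝ`, `u₀, e ∈ X`
with: (i) `J u ≥ α > J u₀` whenever `‖ι u - ι u₀‖ = ρ`; (ii) `‖ι e - ι u₀‖ > ρ` and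
`J e < J u₀`. Let `c` be the mountain pass level (infimum over continuous paths from
`u₀` to `e` of the maximum of `J` along the path). If `J` satisfies the weak
Cerami–Palais–Smale condition at level `c`, then `J` has a critical point `u*`,
different from `u₀`, with `J u* = c ≥ α > J u₀`. -/
theorem mountain_pass_wCPS
    {X S : Type*} [NormedAddCommGroup X] [NormedSpace ℝ X] [CompleteSpace X]
    [NormedAddCommGroup S] [NormedSpace ℝ S] [CompleteSpace S]
    (ι : X →L[ℝ] S) (hι : Function.Injective ι)
    (J : X → ℝ) (hJ : ContDiff ℝ 1 J)
    (ρ : ℝ) (hρ : 0 < ρ) (α : ℝ) (u₀ e : X)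
    (hcirc : ∀ u : X, ‖ι u - ι u₀‖ = ρ → α ≤ J u)
    (hα : J u₀ < α)
    (he : ρ < ‖ι e - ι u₀‖) (hJe : J e < J u₀)
    (c : ℝ)
    (hc : c = sInf {m : ℝ | ∃ φ : C(unitInterval, X),
        φ 0 = u₀ ∧ φ 1 = e ∧ m = ⨆ s : unitInterval, J (φ s)})
    (wCPS : ∀ u : ℕ → X,
      Filter.Tendsto (fun n => J (u n)) Filter.atTop (nhds c) →
      Filter.Tendsto (fun n => ‖fderiv ℝ J (u n)‖ * (1 + ‖u n‖)) Filter.atTop (nhds 0) →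
      ∃ (v : X) (φ : ℕ → ℕ), StrictMono φ ∧
        Filter.Tendsto (fun n => ‖ι (u (φ n)) - ι v‖) Filter.atTop (nhds 0) ∧
        J v = c ∧ fderiv ℝ J v = 0) :
    ∃ u' : X, u' ≠ u₀ ∧ J u' = c ∧ fderiv ℝ J u' = 0 ∧ α ≤ c := by
  obtain rfl := hc.trans (mountainPassLevel_eq_sInf J u₀ e).symm
  exact mountain_pass_wCPS_general hJ hα (hJe.trans hα)
    (fun φ hφ => exists_le_apply_of_forall_eq (by fun_prop) hcirc φ (s := 0) (t := 1)
      (by simpa [hφ.1] using hρ.le) (by simpa [hφ.2] using he.le))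
    fun u hu =>
      let ⟨v, _, _, _, hv⟩ := wCPS u hu.tendsto_apply hu.tendsto_norm_fderiv_mul
      ⟨v, hv⟩
end

section
/- Growth estimate under dilations (Lemma 4.2): Assume (H2) there exists α₁ > 0 with A(t,ξ) ≥ α₁|ξ|^p for all (t,ξ) ∈ ℝ × ℝ^N; (H3) there exists η₁ > 0 with A(t,ξ) ≤ η₁ a(t,ξ)·ξ for all (t,ξ); and (H7) there exist constants s > 0 and α₃ > 0 with s·A(t,ξ) − a(t,ξ)·ξ − A_t(t,ξ)·t ≥ α₃ a(t,ξ)·ξ for all (t,ξ). Then for every (t,ξ) ∈ ℝ × ℝ^N and every σ ≥ 1 one has A(σt, σξ) ≤ σ^{s − α₃/η₁} A(t,ξ). -/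
open Real RealInnerProductSpace

/-! Along a ray `r ↦ r • x`, the inequality `f' (r • x) (r • x) ≤ c * f (r • x)`, a one-sided Euler
homogeneity relation, says that `r ^ (-c) * f (r • x)` has nonpositive derivative; comparing its
values at `1` and `σ` gives `f (σ • x) ≤ σ ^ c * f x`. For the Lagrangian, (H7) and (H3) combine
into this inequality in the joint variable `(t, ξ)`, with `c = s - α₃ / η₁`. -/

open Set

theorem antitoneOn_rpow_neg_mul_of_mul_deriv_le {D : Set ℝ} (hD : Convex ℝ D) (hD₀ : D ⊆ Ioi 0)
    {f f' : ℝ → ℝ} {c : ℝ} (hf : ContinuousOn f D)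
    (hf' : ∀ r ∈ interior D, HasDerivAt f (f' r) r)
    (hle : ∀ r ∈ interior D, r * f' r ≤ c * f r) :
    AntitoneOn (fun r ↦ r ^ (-c) * f r) D := by
  have hpos {r : ℝ} (hr : r ∈ interior D) : 0 < r := hD₀ (interior_subset hr)
  have hderiv (r : ℝ) (hr : r ∈ interior D) :
      HasDerivAt (fun r ↦ r ^ (-c) * f r) (-c * r ^ (-c - 1) * f r + r ^ (-c) * f' r) r :=
    (hasDerivAt_rpow_const (.inl (hpos hr).ne')).mul (hf' r hr)
  have hcont : ContinuousOn (fun r ↦ r ^ (-c) * f r) D :=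
    (continuousOn_id.rpow_const fun r hr ↦ .inl (hD₀ hr).ne').mul hf
  refine antitoneOn_of_hasDerivWithinAt_nonpos hD hcont
    (fun r hr ↦ (hderiv r hr).hasDerivWithinAt) fun r hr ↦ ?_
  have hrpow : r ^ (-c) = r ^ (-c - 1) * r := by
    rw [← rpow_add_one (hpos hr).ne', sub_add_cancel]
  calc -c * r ^ (-c - 1) * f r + r ^ (-c) * f' r
      = r ^ (-c - 1) * (r * f' r - c * f r) := by rw [hrpow]; ring
    _ ≤ 0 := mul_nonpos_of_nonneg_of_nonpos (rpow_nonneg (hpos hr).le _)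
        (sub_nonpos.2 (hle r hr))

theorem apply_smul_le_rpow_mul_of_fderiv_apply_self_le {E : Type*} [NormedAddCommGroup E]
    [NormedSpace ℝ E] {f : E → ℝ} {f' : E → E →L[ℝ] ℝ} {c σ : ℝ} {x : E} (hσ : 1 ≤ σ)
    (hf : ∀ r ∈ Icc 1 σ, HasFDerivAt f (f' (r • x)) (r • x))
    (hle : ∀ r ∈ Icc 1 σ, f' (r • x) (r • x) ≤ c * f (r • x)) :
    f (σ • x) ≤ σ ^ c * f x := by
  have hray (r : ℝ) (hr : r ∈ Icc 1 σ) :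
      HasDerivAt (fun r : ℝ ↦ f (r • x)) (f' (r • x) x) r := by
    have hsmul : HasDerivAt (fun r : ℝ ↦ r • x) x r := by
      simpa only [id_eq, one_smul] using (hasDerivAt_id r).smul_const x
    exact (hf r hr).comp_hasDerivAt r hsmul
  have hanti : AntitoneOn (fun r : ℝ ↦ r ^ (-c) * f (r • x)) (Icc 1 σ) := by
    refine antitoneOn_rpow_neg_mul_of_mul_deriv_le (convex_Icc 1 σ)
      (fun r hr ↦ zero_lt_one.trans_le hr.1)
      (fun r hr ↦ (hray r hr).continuousAt.continuousWithinAt)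
      (fun r hr ↦ hray r (interior_subset hr)) fun r hr ↦ ?_
    simpa only [map_smul, smul_eq_mul] using hle r (interior_subset hr)
  have hσ₀ : 0 < σ := zero_lt_one.trans_le hσ
  have hend : σ ^ (-c) * f (σ • x) ≤ f x := by
    simpa only [one_rpow, one_mul, one_smul] using
      hanti (left_mem_Icc.2 hσ) (right_mem_Icc.2 hσ) hσ
  rwa [rpow_neg hσ₀.le, inv_mul_le_iff₀ (rpow_pos_of_pos hσ₀ c)] at hend

theorem hasFDerivAt_coprod_of_differentiableAt {𝕜 E F G : Type*} [NontriviallyNormedField 𝕜]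
    [NormedAddCommGroup E] [NormedSpace 𝕜 E] [NormedAddCommGroup F] [NormedSpace 𝕜 F]
    [NormedAddCommGroup G] [NormedSpace 𝕜 G] {f : E × F → G} {x : E} {y : F}
    {f₁ : E →L[𝕜] G} {f₂ : F →L[𝕜] G} (hf : DifferentiableAt 𝕜 f (x, y))
    (hf₁ : HasFDerivAt (fun u ↦ f (u, y)) f₁ x) (hf₂ : HasFDerivAt (fun v ↦ f (x, v)) f₂ y) :
    HasFDerivAt f (f₁.coprod f₂) (x, y) := by
  have hinl : fderiv 𝕜 f (x, y) ∘L .inl 𝕜 E F = f₁ :=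
    (hf.hasFDerivAt.comp x (hasFDerivAt_prodMk_left x y)).unique hf₁
  have hinr : fderiv 𝕜 f (x, y) ∘L .inr 𝕜 E F = f₂ :=
    (hf.hasFDerivAt.comp y (hasFDerivAt_prodMk_right x y)).unique hf₂
  rw [← hinl, ← hinr, ContinuousLinearMap.coprod_comp_inl_inr]
  exact hf.hasFDerivAt

theorem growth_estimate_under_dilations_general {E : Type*} [NormedAddCommGroup E]
    [NormedSpace ℝ E] {A At : ℝ → E → ℝ} {a : ℝ → E → E →L[ℝ] ℝ} {η₁ s α₃ : ℝ}
    (hA : Differentiable ℝ fun q : ℝ × E ↦ A q.1 q.2)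
    (hAt : ∀ t ξ, HasDerivAt (fun r ↦ A r ξ) (At t ξ) t)
    (ha : ∀ t ξ, HasFDerivAt (A t) (a t ξ) ξ)
    (hη₁ : 0 < η₁) (hα₃ : 0 ≤ α₃)
    (hH3 : ∀ t ξ, A t ξ ≤ η₁ * a t ξ ξ)
    (hH7 : ∀ t ξ, α₃ * a t ξ ξ ≤ s * A t ξ - a t ξ ξ - At t ξ * t)
    (t : ℝ) (ξ : E) {σ : ℝ} (hσ : 1 ≤ σ) :
    A (σ * t) (σ • ξ) ≤ σ ^ (s - α₃ / η₁) * A t ξ := by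
  let F : ℝ × E → ℝ := fun q ↦ A q.1 q.2
  let F' : ℝ × E → ℝ × E →L[ℝ] ℝ := fun q ↦
    (ContinuousLinearMap.toSpanSingleton ℝ (At q.1 q.2)).coprod (a q.1 q.2)
  have hF (q : ℝ × E) : HasFDerivAt F (F' q) q :=
    hasFDerivAt_coprod_of_differentiableAt (hA q) (hAt q.1 q.2).hasFDerivAt (ha q.1 q.2)
  have heuler : ∀ q, F' q q ≤ (s - α₃ / η₁) * F q := by
    rintro ⟨t, ξ⟩
    have hlower : α₃ / η₁ * A t ξ ≤ α₃ * a t ξ ξ :=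
      calc α₃ / η₁ * A t ξ ≤ α₃ / η₁ * (η₁ * a t ξ ξ) := by gcongr; exact hH3 t ξ
        _ = α₃ * a t ξ ξ := by field_simp
    calc F' (t, ξ) (t, ξ) = At t ξ * t + a t ξ ξ := by simp [F', mul_comm]
      _ ≤ (s - α₃ / η₁) * A t ξ := by linarith [hH7 t ξ]
  exact apply_smul_le_rpow_mul_of_fderiv_apply_self_le (x := (t, ξ)) hσ (fun r _ ↦ hF _)
    fun r _ ↦ heuler _

/-- **Growth estimate under dilations (Lemma 4.2).**
Let `A : ℝ × ℝ^N → ℝ` be `C¹` with partial derivatives `A_t = ∂A/∂t` and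
`a = ∇_ξ A`. Assume (H2) `A(t,ξ) ≥ α₁|ξ|^p`, (H3) `A(t,ξ) ≤ η₁ a(t,ξ)·ξ`, and
(H7) `s·A(t,ξ) − a(t,ξ)·ξ − A_t(t,ξ)·t ≥ α₃ a(t,ξ)·ξ` for all `(t,ξ)`.
Then `A(σt, σξ) ≤ σ^(s − α₃/η₁) A(t,ξ)` for all `(t,ξ)` and all `σ ≥ 1`. -/
theorem growth_estimate_under_dilations
    {N : ℕ} (hN : 1 ≤ N) (p : ℝ) (hp : 1 < p)
    (A At : ℝ → EuclideanSpace ℝ (Fin N) → ℝ)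
    (a : ℝ → EuclideanSpace ℝ (Fin N) → EuclideanSpace ℝ (Fin N))
    (hA : ContDiff ℝ 1 (fun q : ℝ × EuclideanSpace ℝ (Fin N) => A q.1 q.2))
    (hAt : ∀ (t : ℝ) (ξ : EuclideanSpace ℝ (Fin N)),
      HasDerivAt (fun r : ℝ => A r ξ) (At t ξ) t)
    (ha : ∀ (t : ℝ) (ξ : EuclideanSpace ℝ (Fin N)),
      HasGradientAt (fun η => A t η) (a t ξ) ξ)
    (α₁ : ℝ) (hα₁ : 0 < α₁)
    (hH2 : ∀ (t : ℝ) (ξ : EuclideanSpace ℝ (Fin N)), α₁ * ‖ξ‖ ^ p ≤ A t ξ)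
    (η₁ : ℝ) (hη₁ : 0 < η₁)
    (hH3 : ∀ (t : ℝ) (ξ : EuclideanSpace ℝ (Fin N)), A t ξ ≤ η₁ * ⟪a t ξ, ξ⟫)
    (s α₃ : ℝ) (hs : 0 < s) (hα₃ : 0 < α₃)
    (hH7 : ∀ (t : ℝ) (ξ : EuclideanSpace ℝ (Fin N)),
      α₃ * ⟪a t ξ, ξ⟫ ≤ s * A t ξ - ⟪a t ξ, ξ⟫ - At t ξ * t) :
    ∀ (t : ℝ) (ξ : EuclideanSpace ℝ (Fin N)) (σ : ℝ), 1 ≤ σ →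
      A (σ * t) (σ • ξ) ≤ σ ^ (s - α₃ / η₁) * A t ξ := by
  intro t ξ _ hσ
  exact growth_estimate_under_dilations_general (hA.differentiable one_ne_zero) hAt
    (fun t ξ ↦ (ha t ξ).hasFDerivAt) hη₁ hα₃.le hH3 hH7 t ξ hσ
end

section
/- Sign structure of the truncation profile h for small λ (Section 3): Let 1 < q < p < s be real exponents and α₁ > 0, c_q > 0, c_s > 0 constants, and for λ > 0 set h_λ(x) = α₁ x^p − (λ/q) c_q^q x^q − (1/s) c_s^s x^s for x ≥ 0. Then there exists λ₁ > 0 such that for every λ ∈ (0, λ₁) there are real numbers 0 < R₀ < R₁ with h_λ(R₀) = h_λ(R₁) = 0, h_λ(x) > 0 for all x ∈ (R₀, R₁), and h_λ(x) ≤ 0 for all x ∈ [0, R₀] ∪ [R₁, +∞). -/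
open Real

/-- The truncation profile `h_λ(x) = α₁ x^p − (λ/q) c_q^q x^q − (1/s) c_s^s x^s`. -/
noncomputable def truncProfile (α₁ cq cs q p s lam x : ℝ) : ℝ :=
  α₁ * x ^ p - lam / q * cq ^ q * x ^ q - 1 / s * cs ^ s * x ^ s

/-! In the variable `t = log x`, dividing `h_λ` by `x ^ p` leaves the function
`α₁ - A * exp (-(p - q) * t) - B * exp ((s - p) * t)` with `A` proportional to `λ`. It is concave
and tends to `-∞` at both ends, so it is positive exactly on a bounded open interval as soon as it
is positive somewhere. Choosing `t` with `B * exp ((s - p) * t) < α₁` first, and `λ` small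
afterwards, makes it positive at `t`.
-/

open Set Filter Topology

section OrderTopology

variable {α β : Type*} [ConditionallyCompleteLinearOrder α] [TopologicalSpace α] [OrderTopology α]
  [DenselyOrdered α] [NoMinOrder α] [NoMaxOrder α]

theorem eq_Ioo_csInf_csSup_of_isConnected_of_isOpen {S : Set α} (hconn : IsConnected S)
    (hopen : IsOpen S) (hbelow : BddBelow S) (habove : BddAbove S) :
    S = Ioo (sInf S) (sSup S) := by
  refine Subset.antisymm ?_ (hconn.Ioo_csInf_csSup_subset hbelow habove)
  rw [← interior_Icc]
  exact interior_maximal (subset_Icc_csInf_csSup hbelow habove) hopen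

theorem exists_setOf_lt_eq_Ioo [LinearOrder β] [TopologicalSpace β]
    [OrderClosedTopology β] {f : α → β} {c : β} (hf : Continuous f)
    (hconn : IsConnected {x | c < f x}) (hbelow : BddBelow {x | c < f x})
    (habove : BddAbove {x | c < f x}) :
    ∃ a b, a < b ∧ f a = c ∧ f b = c ∧ {x | c < f x} = Ioo a b := by
  set S := {x | c < f x}
  have hS : S = Ioo (sInf S) (sSup S) :=
    eq_Ioo_csInf_csSup_of_isConnected_of_isOpen hconn (isOpen_lt continuous_const hf) hbelow habove
  have hlt : sInf S < sSup S := nonempty_Ioo.mp (hS ▸ hconn.nonempty)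
  have hfrontier : {sInf S, sSup S} ⊆ {x | c = f x} := by
    rw [← frontier_Ioo hlt, ← hS]
    exact frontier_lt_subset_eq continuous_const hf
  exact ⟨sInf S, sSup S, hlt, (hfrontier (by simp)).symm, (hfrontier (by simp)).symm, hS⟩

end OrderTopology

theorem convexOn_mul_exp_mul {K : ℝ} (hK : 0 ≤ K) (c : ℝ) :
    ConvexOn ℝ univ fun t : ℝ ↦ K * exp (c * t) :=
  (convexOn_exp.comp_linearMap (LinearMap.mulLeft ℝ c)).smul hK

theorem lt_log_div_of_mul_exp_lt {K u y : ℝ} (hK : 0 < K) (h : K * exp u < y) :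
    u < log (y / K) := by
  have hexp : exp u < y / K := (lt_div_iff₀' hK).mpr h
  exact (lt_log_iff_exp_lt ((exp_pos u).trans hexp)).mpr hexp

/-- The truncation profile divided by `x ^ p`, in the variable `t = log x`: here `a = p - q` and
`b = s - p` are the gaps between the exponents, and `A`, `B` the coefficients of `x ^ q`, `x ^ s`
(see `truncProfile_exp`). -/
noncomputable def logProfile (α A B a b t : ℝ) : ℝ :=
  α - A * exp (-a * t) - B * exp (b * t)

section LogProfile

variable {α A B a b : ℝ}

theorem continuous_logProfile : Continuous (logProfile α A B a b) := by
  unfold logProfile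
  fun_prop

theorem concaveOn_logProfile (hA : 0 ≤ A) (hB : 0 ≤ B) :
    ConcaveOn ℝ univ (logProfile α A B a b) :=
  ((concaveOn_const α convex_univ).sub (convexOn_mul_exp_mul hA (-a))).sub
    (convexOn_mul_exp_mul hB b)

theorem bddBelow_setOf_logProfile_pos (hA : 0 < A) (hB : 0 ≤ B) (ha : 0 < a) :
    BddBelow {t | 0 < logProfile α A B a b t} := by
  refine ⟨-(log (α / A) / a), fun t ht ↦ ?_⟩
  have hnonneg : 0 ≤ B * exp (b * t) := by positivity
  have hlt : -a * t < log (α / A) :=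
    lt_log_div_of_mul_exp_lt hA (by simp only [logProfile, mem_ofPred_eq] at ht; linarith)
  rw [neg_le, le_div_iff₀' ha]
  linarith

theorem bddAbove_setOf_logProfile_pos (hA : 0 ≤ A) (hB : 0 < B) (hb : 0 < b) :
    BddAbove {t | 0 < logProfile α A B a b t} := by
  refine ⟨log (α / B) / b, fun t ht ↦ ?_⟩
  have hnonneg : 0 ≤ A * exp (-a * t) := by positivity
  have hlt : b * t < log (α / B) :=
    lt_log_div_of_mul_exp_lt hB (by simp only [logProfile, mem_ofPred_eq] at ht; linarith)
  exact (le_div_iff₀' hb).mpr hlt.le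

theorem exists_setOf_logProfile_pos_eq_Ioo (hA : 0 < A) (hB : 0 < B) (ha : 0 < a) (hb : 0 < b)
    (hpos : ∃ t, 0 < logProfile α A B a b t) :
    ∃ t₀ t₁, t₀ < t₁ ∧ logProfile α A B a b t₀ = 0 ∧ logProfile α A B a b t₁ = 0 ∧
      {t | 0 < logProfile α A B a b t} = Ioo t₀ t₁ := by
  have hconvex : Convex ℝ {t | 0 < logProfile α A B a b t} := by
    simpa only [mem_univ, true_and] using (concaveOn_logProfile hA.le hB.le).convex_gt 0
  exact exists_setOf_lt_eq_Ioo continuous_logProfile ⟨hpos, hconvex.isPreconnected⟩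
    (bddBelow_setOf_logProfile_pos hA hB.le ha) (bddAbove_setOf_logProfile_pos hA.le hB hb)

theorem exists_forall_lt_exists_logProfile_pos (hα : 0 < α) (hb : 0 < b) (B a : ℝ) :
    ∃ A₁ > 0, ∀ A < A₁, ∃ t, 0 < logProfile α A B a b t := by
  have hlim : Tendsto (fun t ↦ B * exp (b * t)) atBot (𝓝 0) := by
    simpa only [mul_zero, Function.comp_apply, id] using
      (tendsto_exp_atBot.comp (tendsto_id.const_mul_atBot hb)).const_mul B
  obtain ⟨t, ht⟩ := (hlim.eventually_lt_const hα).exists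
  refine ⟨(α - B * exp (b * t)) / exp (-a * t), div_pos (sub_pos.mpr ht) (exp_pos _),
    fun A hA ↦ ⟨t, ?_⟩⟩
  rw [lt_div_iff₀ (exp_pos _)] at hA
  unfold logProfile
  linarith

end LogProfile

section TruncProfile

variable {α₁ cq cs q p s lam : ℝ}

theorem truncProfile_exp (t : ℝ) :
    truncProfile α₁ cq cs q p s lam (exp t) =
      exp (p * t) * logProfile α₁ (lam / q * cq ^ q) (1 / s * cs ^ s) (p - q) (s - p) t := by
  have hq : exp (t * q) = exp (p * t) * exp (-(p - q) * t) := by rw [← exp_add]; ring_nf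
  have hs : exp (t * s) = exp (p * t) * exp ((s - p) * t) := by rw [← exp_add]; ring_nf
  rw [truncProfile, logProfile, ← exp_mul, ← exp_mul, ← exp_mul, hq, hs, mul_comm t p]
  ring

theorem truncProfile_exp_pos_iff (t : ℝ) :
    0 < truncProfile α₁ cq cs q p s lam (exp t) ↔
      0 < logProfile α₁ (lam / q * cq ^ q) (1 / s * cs ^ s) (p - q) (s - p) t := by
  rw [truncProfile_exp, mul_pos_iff_of_pos_left (exp_pos _)]

theorem truncProfile_zero (hq : q ≠ 0) (hp : p ≠ 0) (hs : s ≠ 0) :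
    truncProfile α₁ cq cs q p s lam 0 = 0 := by
  simp [truncProfile, zero_rpow, hq, hp, hs]

theorem exists_truncProfile_pos_iff_mem_Ioo (hq : 0 < q) (hqp : q < p) (hps : p < s)
    (hcq : 0 < cq) (hcs : 0 < cs) (hlam : 0 < lam)
    (hpos : ∃ x > 0, 0 < truncProfile α₁ cq cs q p s lam x) :
    ∃ R₀ R₁ : ℝ, 0 < R₀ ∧ R₀ < R₁ ∧
      truncProfile α₁ cq cs q p s lam R₀ = 0 ∧ truncProfile α₁ cq cs q p s lam R₁ = 0 ∧
      ∀ x > 0, 0 < truncProfile α₁ cq cs q p s lam x ↔ x ∈ Ioo R₀ R₁ := by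
  have hs : 0 < s := hq.trans (hqp.trans hps)
  obtain ⟨x, hx, hfx⟩ := hpos
  rw [← exp_log hx, truncProfile_exp_pos_iff] at hfx
  obtain ⟨t₀, t₁, hlt, h₀, h₁, hIoo⟩ := exists_setOf_logProfile_pos_eq_Ioo
    (by positivity) (by positivity) (sub_pos.mpr hqp) (sub_pos.mpr hps) ⟨log x, hfx⟩
  refine ⟨exp t₀, exp t₁, exp_pos _, exp_lt_exp.mpr hlt, ?_, ?_, fun x hx ↦ ?_⟩
  · rw [truncProfile_exp, h₀, mul_zero]
  · rw [truncProfile_exp, h₁, mul_zero]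
  · have hlog := Set.ext_iff.mp hIoo (log x)
    rwa [mem_ofPred_eq, ← truncProfile_exp_pos_iff, exp_log hx, mem_Ioo, lt_log_iff_exp_lt hx,
      log_lt_iff_lt_exp hx] at hlog

theorem exists_forall_lt_exists_truncProfile_pos (hq : 0 < q) (hps : p < s) (hα₁ : 0 < α₁)
    (hcq : 0 < cq) (cs : ℝ) :
    ∃ lam₁ > 0, ∀ lam < lam₁, ∃ x > 0, 0 < truncProfile α₁ cq cs q p s lam x := by
  obtain ⟨A₁, hA₁, hpos⟩ := exists_forall_lt_exists_logProfile_pos hα₁ (sub_pos.mpr hps)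
    (1 / s * cs ^ s) (p - q)
  refine ⟨A₁ * q / cq ^ q, by positivity, fun lam hlam ↦ ?_⟩
  have hA : lam / q * cq ^ q < A₁ := by
    rwa [div_mul_eq_mul_div, div_lt_iff₀ hq, ← lt_div_iff₀ (by positivity)]
  obtain ⟨t, ht⟩ := hpos _ hA
  exact ⟨exp t, exp_pos t, (truncProfile_exp_pos_iff t).mpr ht⟩

end TruncProfile

theorem truncProfile_sign_structure_general
    (p q s α₁ cq cs : ℝ)
    (hq : 0 < q) (hqp : q < p) (hps : p < s)
    (hα₁ : 0 < α₁) (hcq : 0 < cq) (hcs : 0 < cs) :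
    ∃ lam₁ > (0 : ℝ), ∀ lam : ℝ, 0 < lam → lam < lam₁ →
      ∃ R₀ R₁ : ℝ, 0 < R₀ ∧ R₀ < R₁ ∧
        truncProfile α₁ cq cs q p s lam R₀ = 0 ∧
        truncProfile α₁ cq cs q p s lam R₁ = 0 ∧
        (∀ x : ℝ, R₀ < x → x < R₁ → 0 < truncProfile α₁ cq cs q p s lam x) ∧
        (∀ x : ℝ, 0 ≤ x → x ≤ R₀ → truncProfile α₁ cq cs q p s lam x ≤ 0) ∧
        (∀ x : ℝ, R₁ ≤ x → truncProfile α₁ cq cs q p s lam x ≤ 0) := by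
  obtain ⟨lam₁, hlam₁, hpos⟩ :=
    exists_forall_lt_exists_truncProfile_pos hq hps hα₁ hcq cs
  refine ⟨lam₁, hlam₁, fun lam hlam hlt ↦ ?_⟩
  obtain ⟨R₀, R₁, hR₀, hR, h₀, h₁, hiff⟩ :=
    exists_truncProfile_pos_iff_mem_Ioo hq hqp hps hcq hcs hlam (hpos lam hlt)
  refine ⟨R₀, R₁, hR₀, hR, h₀, h₁, fun x hx₀ hx₁ ↦ (hiff x (hR₀.trans hx₀)).mpr ⟨hx₀, hx₁⟩,
    fun x hx hxR ↦ ?_, fun x hx ↦ ?_⟩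
  · obtain rfl | hx := hx.eq_or_lt
    · have hp : 0 < p := hq.trans hqp
      exact (truncProfile_zero hq.ne' hp.ne' (hp.trans hps).ne').le
    · exact not_lt.mp fun h ↦ hxR.not_gt ((hiff x hx).mp h).1
  · exact not_lt.mp fun h ↦ hx.not_gt ((hiff x (hR₀.trans (hR.trans_le hx))).mp h).2

/-- **Sign structure of the truncation profile `h_λ` for small `λ` (Section 3).**
Let `1 < q < p < s` and `α₁, c_q, c_s > 0`. Then there exists `λ₁ > 0` such that for
every `λ ∈ (0, λ₁)` there are `0 < R₀ < R₁` with `h_λ(R₀) = h_λ(R₁) = 0`,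
`h_λ(x) > 0` for `x ∈ (R₀, R₁)`, and `h_λ(x) ≤ 0` for `x ∈ [0, R₀] ∪ [R₁, +∞)`. -/
theorem truncProfile_sign_structure
    (p q s α₁ cq cs : ℝ)
    (hq : 1 < q) (hqp : q < p) (hps : p < s)
    (hα₁ : 0 < α₁) (hcq : 0 < cq) (hcs : 0 < cs) :
    ∃ lam₁ > (0 : ℝ), ∀ lam : ℝ, 0 < lam → lam < lam₁ →
      ∃ R₀ R₁ : ℝ, 0 < R₀ ∧ R₀ < R₁ ∧
        truncProfile α₁ cq cs q p s lam R₀ = 0 ∧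
        truncProfile α₁ cq cs q p s lam R₁ = 0 ∧
        (∀ x : ℝ, R₀ < x → x < R₁ → 0 < truncProfile α₁ cq cs q p s lam x) ∧
        (∀ x : ℝ, 0 ≤ x → x ≤ R₀ → truncProfile α₁ cq cs q p s lam x ≤ 0) ∧
        (∀ x : ℝ, R₁ ≤ x → truncProfile α₁ cq cs q p s lam x ≤ 0) :=
  truncProfile_sign_structure_general p q s α₁ cq cs (one_pos.trans hq) hqp hps hα₁ hcq hcs
end
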